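/- arXiv:1108.4400 — 2 statements merged into one kernel-verified Lean document; each statement's English description precedes it below -/
import Mathlib

section
/- For every ε > 0, reals λ > λ' > 0, and functional M₁ : (ℕ → ℕ) → ℕ, there exists a functional M₂ : (ℕ → ℕ) → ℕ with the following property: for every probability space (X, B, μ) and every sequence (f_n) of measurable functions on X with 0 ≤ f_n(x) ≤ 1 for all n and x, if for every F : ℕ → ℕ one has μ({x : ∃ m ≤ M₁(F), ∀ n, n' ∈ [m, F(m)], |f_n(x) − f_{n'}(x)| < ε}) > 1 − λ', then for every F : ℕ → ℕ there is an m ≤ M₂(F) such that for every real p ≥ 1 and all n, n' ∈ [m, F(m)], ‖f_n − f_{n'}‖_p < (ε^p + λ)^(1/p), where ‖g‖_p = (∫ |g|^p dμ)^(1/p). -/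
open MeasureTheory

/-!
Fix `F` and suppose no bound works, so that for every `k` there is a counterexample on some space
`(X k, μ k)`. By compactness, along a subsequence the measures of all the sets where the `k`-th
sequence oscillates on `[m, K]` converge to limits `l m K`, which increase with `K`. Choose
`G m ≥ F m` so large that `l m K < l m (G m) + e m` for every `K`, where `∑ e m = lam - lam'`. Then
`G` does not depend on `k`, and neither does `M := M₁ G`. For a suitable `k ≥ M`, the points
oscillating on `[M, F M]` oscillate on all `[m, G m]` with `m ≤ M`, up to exceptional sets of total
measure at most `lam - lam'`; this contradicts the hypothesis for `G`.
-/

open Filter Topology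

universe u v

section RealSequences

lemma exists_ge_forall_lt_add_of_monotone {u : ℕ → ℝ} (hu : Monotone u)
    (hbdd : BddAbove (Set.range u)) (N : ℕ) {δ : ℝ} (hδ : 0 < δ) :
    ∃ n ≥ N, ∀ k, u k < u n + δ := by
  have hnear : ∀ᶠ n in atTop, (⨆ k, u k) - δ < u n :=
    (tendsto_atTop_ciSup hu hbdd).eventually_const_lt (sub_lt_self _ hδ)
  obtain ⟨n, hn, hNn⟩ := (hnear.and (eventually_ge_atTop N)).exists
  exact ⟨n, hNn, fun k => by linarith [le_ciSup hbdd k]⟩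

lemma exists_ge_frequently_forall_lt_add {ι : Type*} [Countable ι] {a : ℕ → ι → ℕ → ℝ} {b c : ℝ}
    (hmem : ∀ k i K, a k i K ∈ Set.Icc b c) (hmono : ∀ k i, Monotone (a k i))
    (F : ι → ℕ) {e : ι → ℝ} (he : ∀ i, 0 < e i) :
    ∃ G : ι → ℕ, (∀ i, F i ≤ G i) ∧ ∀ (s : Finset ι) (K : ℕ),
      ∃ᶠ k in atTop, ∀ i ∈ s, a k i K < a k i (G i) + e i := by
  have hcompact : IsCompact (Set.univ.pi fun _ : ι => Set.univ.pi fun _ : ℕ => Set.Icc b c) :=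
    isCompact_univ_pi fun _ => isCompact_univ_pi fun _ => isCompact_Icc
  obtain ⟨l, hl, φ, hφ, hlim⟩ :=
    hcompact.tendsto_subseq (x := a) fun k i _ K _ => hmem k i K
  have hlim' (i : ι) (K : ℕ) : Tendsto (fun j => a (φ j) i K) atTop (𝓝 (l i K)) :=
    tendsto_pi_nhds.1 (tendsto_pi_nhds.1 hlim i) K
  have hl_mono (i : ι) : Monotone (l i) := fun K K' hK =>
    le_of_tendsto_of_tendsto' (hlim' i K) (hlim' i K') fun j => hmono (φ j) i hK
  have hl_bdd (i : ι) : BddAbove (Set.range (l i)) :=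
    ⟨c, Set.forall_mem_range.2 fun K => (hl i trivial K trivial).2⟩
  choose G hFG hG using fun i =>
    exists_ge_forall_lt_add_of_monotone (hl_mono i) (hl_bdd i) (F i) (he i)
  refine ⟨G, hFG, fun s K => hφ.tendsto_atTop.frequently (Eventually.frequently ?_)⟩
  exact (eventually_all_finset s).2 fun i _ =>
    (hlim' i K).eventually_lt ((hlim' i (G i)).add_const (e i)) (hG i K)

end RealSequences

section FiniteMeasure

variable {X : Type u} [MeasurableSpace X] {μ : Measure X} [IsFiniteMeasure μ]

lemma measureReal_le_measureReal_biInter_add_sum {ι : Type*} {s : Finset ι} {S : Set X}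
    {A B : ι → Set X} (hA : ∀ i ∈ s, NullMeasurableSet (A i) μ) (hAB : ∀ i ∈ s, A i ⊆ B i)
    (hSB : ∀ i ∈ s, S ⊆ B i) :
    μ.real S ≤ μ.real (⋂ i ∈ s, A i) + ∑ i ∈ s, (μ.real (B i) - μ.real (A i)) := by
  have hcover : S ⊆ (⋂ i ∈ s, A i) ∪ ⋃ i ∈ s, B i \ A i := by
    intro x hx
    by_cases hxA : ∀ i ∈ s, x ∈ A i
    · exact .inl (Set.mem_iInter₂.2 hxA)
    · push Not at hxA
      obtain ⟨i, hi, hxi⟩ := hxA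
      exact .inr (Set.mem_biUnion hi ⟨hSB i hi hx, hxi⟩)
  calc μ.real S
      ≤ μ.real (⋂ i ∈ s, A i) + μ.real (⋃ i ∈ s, B i \ A i) :=
        (measureReal_mono hcover).trans (measureReal_union_le _ _)
    _ ≤ μ.real (⋂ i ∈ s, A i) + ∑ i ∈ s, μ.real (B i \ A i) := by
        gcongr
        exact measureReal_biUnion_finset_le s _
    _ = μ.real (⋂ i ∈ s, A i) + ∑ i ∈ s, (μ.real (B i) - μ.real (A i)) := by
        congr 1
        refine Finset.sum_congr rfl fun i hi => ?_
        rw [← measureReal_inter_add_sdiff₀ (s := B i) (hA i hi), Set.inter_eq_right.2 (hAB i hi),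
          add_sub_cancel_left]

lemma integral_rpow_le_rpow_mul_add_measureReal {h : X → ℝ} (hmeas : AEMeasurable h μ)
    (h_nonneg : 0 ≤ᵐ[μ] h) (h_le_one : ∀ᵐ x ∂μ, h x ≤ 1) {ε p : ℝ} (hε : 0 ≤ ε) (hp : 0 ≤ p) :
    ∫ x, h x ^ p ∂μ ≤ ε ^ p * μ.real Set.univ + μ.real {x | ε ≤ h x} := by
  set S := {x | ε ≤ h x}
  have hS : NullMeasurableSet S μ := nullMeasurableSet_le aemeasurable_const hmeas
  have hint : Integrable (S.indicator fun _ => (1 : ℝ)) μ := (integrable_const 1).indicator₀ hS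
  have hpointwise : ∀ᵐ x ∂μ, h x ^ p ≤ ε ^ p + S.indicator (fun _ => (1 : ℝ)) x := by
    filter_upwards [h_nonneg, h_le_one] with x hx0 hx1
    by_cases hxS : x ∈ S
    · rw [Set.indicator_of_mem hxS]
      linarith [Real.rpow_le_one hx0 hx1 hp, Real.rpow_nonneg hε p]
    · rw [Set.indicator_of_notMem hxS, add_zero]
      exact Real.rpow_le_rpow hx0 (not_le.1 hxS).le hp
  calc ∫ x, h x ^ p ∂μ
      ≤ ∫ x, (ε ^ p + S.indicator (fun _ => (1 : ℝ)) x) ∂μ :=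
        integral_mono_of_nonneg (h_nonneg.mono fun x hx => Real.rpow_nonneg hx p)
          ((integrable_const _).add hint) hpointwise
    _ = ε ^ p * μ.real Set.univ + μ.real S := by
        rw [integral_add (integrable_const _) hint, integral_indicator₀ hS, integral_const,
          setIntegral_const, smul_eq_mul, smul_eq_mul, mul_one, mul_comm]

end FiniteMeasure

theorem exists_forall_exists_le_measureReal_lt {lam lam' : ℝ} (h : lam' < lam) (C : ℝ)
    (M₁ : (ℕ → ℕ) → ℕ) (F : ℕ → ℕ) :
    ∃ N : ℕ, ∀ (X : Type u) [MeasurableSpace X] (μ : Measure X) [IsFiniteMeasure μ]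
      (A : ℕ → ℕ → Set X), μ.real Set.univ ≤ C → (∀ m K, NullMeasurableSet (A m K) μ) →
      (∀ K, Antitone fun m => A m K) → (∀ m, Monotone (A m)) →
      (∀ G : ℕ → ℕ, μ.real (⋂ m ∈ Finset.Iic (M₁ G), A m (G m)) < lam') →
      ∃ m ≤ N, μ.real (A m (F m)) < lam := by
  by_contra! hcon
  choose X _ μ _ A hC hmeas hanti hmono hinter hlarge using hcon
  have hsum := hasSum_geometric_two' (lam - lam')
  set e : ℕ → ℝ := fun m => (lam - lam') / 2 / 2 ^ m
  have he (m : ℕ) : 0 < e m := by have := sub_pos.2 h; positivity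
  obtain ⟨G, hFG, hG⟩ := exists_ge_frequently_forall_lt_add
    (a := fun k m K => (μ k).real (A k m K))
    (fun k _ _ => ⟨measureReal_nonneg, (measureReal_mono (Set.subset_univ _)).trans (hC k)⟩)
    (fun k m _ _ hK => measureReal_mono (hmono k m hK)) F he
  set M := M₁ G
  set K := (Finset.Iic M).sup G
  have hGK {m : ℕ} (hm : m ∈ Finset.Iic M) : G m ≤ K := Finset.le_sup hm
  obtain ⟨k, hk, hMk⟩ := ((hG (Finset.Iic M) K).and_eventually (eventually_ge_atTop M)).exists
  refine (hlarge k M hMk).not_gt ?_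
  calc (μ k).real (A k M (F M))
      ≤ (μ k).real (⋂ m ∈ Finset.Iic M, A k m (G m)) +
          ∑ m ∈ Finset.Iic M, ((μ k).real (A k m K) - (μ k).real (A k m (G m))) :=
        measureReal_le_measureReal_biInter_add_sum (fun m _ => hmeas k m (G m))
          (fun m hm => hmono k m (hGK hm)) fun m hm =>
            (hmono k M ((hFG M).trans (hGK (Finset.mem_Iic.2 le_rfl)))).trans
              (hanti k K (Finset.mem_Iic.1 hm))
    _ ≤ (μ k).real (⋂ m ∈ Finset.Iic M, A k m (G m)) + ∑ m ∈ Finset.Iic M, e m := by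
        gcongr with m hm
        linarith [hk m hm]
    _ ≤ (μ k).real (⋂ m ∈ Finset.Iic M, A k m (G m)) + (lam - lam') := by
        gcongr
        exact sum_le_hasSum _ (fun m _ => (he m).le) hsum
    _ < lam := by linarith [hinter k G]

section Oscillation

variable {X : Type u} {E : Type v} [PseudoMetricSpace E]

/-- The set of points at which the sequence `f` fails to be `ε`-stable on `[m, K]`: two of its terms
there are at distance at least `ε`. Metastability of `f` outside a set of small measure says that
finite intersections of such sets have small measure. -/
def oscillationSet (ε : ℝ) (f : ℕ → X → E) (m K : ℕ) : Set X :=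
  {x | ∃ n ∈ Set.Icc m K, ∃ n' ∈ Set.Icc m K, ε ≤ dist (f n x) (f n' x)}

lemma oscillationSet_subset_oscillationSet (ε : ℝ) (f : ℕ → X → E) {m m' K K' : ℕ}
    (hm : m' ≤ m) (hK : K ≤ K') : oscillationSet ε f m K ⊆ oscillationSet ε f m' K' := by
  rintro x ⟨n, hn, n', hn', hx⟩
  exact ⟨n, Set.Icc_subset_Icc hm hK hn, n', Set.Icc_subset_Icc hm hK hn', hx⟩

lemma compl_biInter_oscillationSet (ε : ℝ) (f : ℕ → X → E) (M : ℕ) (F : ℕ → ℕ) :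
    (⋂ m ∈ Finset.Iic M, oscillationSet ε f m (F m))ᶜ =
      {x | ∃ m ≤ M, ∀ n ∈ Set.Icc m (F m), ∀ n' ∈ Set.Icc m (F m),
        dist (f n x) (f n' x) < ε} := by
  ext x
  simp only [oscillationSet, Set.mem_compl_iff, Set.mem_iInter, Finset.mem_Iic, Set.mem_ofPred_eq]
  push Not
  rfl

variable [MeasurableSpace X] {μ : Measure X} {f : ℕ → X → E}

lemma nullMeasurableSet_oscillationSet (ε : ℝ) (hf : ∀ n, AEStronglyMeasurable (f n) μ)
    (m K : ℕ) : NullMeasurableSet (oscillationSet ε f m K) μ := by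
  have hunion : oscillationSet ε f m K = ⋃ n ∈ Set.Icc m K, ⋃ n' ∈ Set.Icc m K,
      {x | ε ≤ dist (f n x) (f n' x)} := by
    ext x
    simp only [oscillationSet, Set.mem_iUnion, Set.mem_ofPred_eq, exists_prop]
  rw [hunion]
  exact .biUnion (Set.to_countable _) fun n _ => .biUnion (Set.to_countable _) fun n' _ =>
    nullMeasurableSet_le aemeasurable_const ((hf n).dist (hf n')).aemeasurable

lemma integral_dist_rpow_lt_of_measureReal_oscillationSet_lt [IsFiniteMeasure μ]
    {ε lam p : ℝ} (hε : 0 ≤ ε) (hp : 0 ≤ p) {m K n n' : ℕ}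
    (hfn : AEStronglyMeasurable (f n) μ) (hfn' : AEStronglyMeasurable (f n') μ)
    (hdist : ∀ᵐ x ∂μ, dist (f n x) (f n' x) ≤ 1) (hosc : μ.real (oscillationSet ε f m K) < lam)
    (hn : n ∈ Set.Icc m K) (hn' : n' ∈ Set.Icc m K) :
    ∫ x, dist (f n x) (f n' x) ^ p ∂μ < ε ^ p * μ.real Set.univ + lam := by
  have hsub : {x | ε ≤ dist (f n x) (f n' x)} ⊆ oscillationSet ε f m K :=
    fun _ hx => ⟨n, hn, n', hn', hx⟩
  calc ∫ x, dist (f n x) (f n' x) ^ p ∂μ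
      ≤ ε ^ p * μ.real Set.univ + μ.real {x | ε ≤ dist (f n x) (f n' x)} :=
        integral_rpow_le_rpow_mul_add_measureReal (hfn.dist hfn').aemeasurable
          (ae_of_all _ fun _ => dist_nonneg) hdist hε hp
    _ ≤ ε ^ p * μ.real Set.univ + μ.real (oscillationSet ε f m K) :=
        add_le_add le_rfl (measureReal_mono hsub)
    _ < ε ^ p * μ.real Set.univ + lam := by gcongr

end Oscillation

theorem stmt_12_general (lam lam' C : ℝ) (h1 : lam' < lam) (M₁ : (ℕ → ℕ) → ℕ) :
    ∃ M₂ : (ℕ → ℕ) → ℕ, ∀ (X : Type u) [MeasurableSpace X] (μ : Measure X) [IsFiniteMeasure μ],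
      μ.real Set.univ ≤ C → ∀ (E : Type v) [PseudoMetricSpace E] (f : ℕ → X → E),
      (∀ n, AEStronglyMeasurable (f n) μ) →
      (∀ n n', ∀ᵐ x ∂μ, dist (f n x) (f n' x) ≤ 1) → ∀ ε : ℝ, 0 ≤ ε →
      (∀ F : ℕ → ℕ,
        μ.real Set.univ - lam' <
          μ.real {x | ∃ m ≤ M₁ F, ∀ n ∈ Set.Icc m (F m), ∀ n' ∈ Set.Icc m (F m),
            dist (f n x) (f n' x) < ε}) →
      ∀ F : ℕ → ℕ, ∃ m ≤ M₂ F,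
        ∀ p : ℝ, 0 < p →
          ∀ n ∈ Set.Icc m (F m), ∀ n' ∈ Set.Icc m (F m),
            (∫ x, dist (f n x) (f n' x) ^ p ∂μ) ^ (1 / p) <
              (ε ^ p * μ.real Set.univ + lam) ^ (1 / p) := by
  choose M₂ hM₂ using exists_forall_exists_le_measureReal_lt h1 C M₁
  refine ⟨M₂, fun X _ μ _ hC E _ f hf hdist ε hε hmeta F => ?_⟩
  have hnull := nullMeasurableSet_oscillationSet ε hf
  have hinter (G : ℕ → ℕ) :
      μ.real (⋂ m ∈ Finset.Iic (M₁ G), oscillationSet ε f m (G m)) < lam' := by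
    have hG := hmeta G
    rw [← compl_biInter_oscillationSet, measureReal_compl₀
      (Finset.nullMeasurableSet_biInter _ fun m _ => hnull m (G m))] at hG
    linarith
  obtain ⟨m, hm, hosc⟩ := hM₂ F X μ (oscillationSet ε f) hC hnull
    (fun K _ _ hm => oscillationSet_subset_oscillationSet ε f hm le_rfl)
    (fun m _ _ hK => oscillationSet_subset_oscillationSet ε f le_rfl hK) hinter
  exact ⟨m, hm, fun p hp n hn n' hn' =>
    Real.rpow_lt_rpow (integral_nonneg fun _ => Real.rpow_nonneg dist_nonneg p)
      (integral_dist_rpow_lt_of_measureReal_oscillationSet_lt hε hp.le (hf n) (hf n')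
        (hdist n n') hosc hn hn')
      (one_div_pos.2 hp)⟩

theorem stmt_12 (ε lam lam' : ℝ) (hε : 0 < ε) (h1 : lam' < lam) (h2 : 0 < lam')
    (M₁ : (ℕ → ℕ) → ℕ) :
    ∃ M₂ : (ℕ → ℕ) → ℕ, ∀ (X : Type) (_ : MeasurableSpace X) (μ : Measure X),
      IsProbabilityMeasure μ → ∀ f : ℕ → X → ℝ, (∀ n, Measurable (f n)) →
      (∀ n x, 0 ≤ f n x ∧ f n x ≤ 1) →
      (∀ F : ℕ → ℕ,
        (μ {x | ∃ m ≤ M₁ F, ∀ n ∈ Set.Icc m (F m), ∀ n' ∈ Set.Icc m (F m),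
            |f n x - f n' x| < ε}).toReal > 1 - lam') →
      ∀ F : ℕ → ℕ, ∃ m ≤ M₂ F,
        ∀ p : ℝ, 1 ≤ p →
          ∀ n ∈ Set.Icc m (F m), ∀ n' ∈ Set.Icc m (F m),
            (∫ x, |f n x - f n' x| ^ p ∂μ) ^ (1 / p) < (ε ^ p + lam) ^ (1 / p) := by
  obtain ⟨M₂, hM₂⟩ := stmt_12_general lam lam' 1 h1 M₁
  refine ⟨M₂, fun X _ μ _ f hf h01 hmeta F => ?_⟩
  obtain ⟨m, hm, hosc⟩ := hM₂ X μ probReal_univ.le ℝ f (fun n => (hf n).aestronglyMeasurable)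
    (fun n n' => ae_of_all _ fun x => Real.dist_le_of_mem_Icc_01 (h01 n x) (h01 n' x)) ε hε.le
    (by simpa only [probReal_univ, Real.dist_eq, gt_iff_lt, ← measureReal_def] using hmeta) F
  exact ⟨m, hm, fun p hp => by
    simpa only [probReal_univ, mul_one, Real.dist_eq] using hosc p (zero_lt_one.trans_le hp)⟩
end

section
/- Let (f_n) be a sequence of measurable real-valued functions on a measure space (X, B, μ). If (f_n) converges AUM', then (f_n) converges AUM. -/
open MeasureTheory

section

variable {X E : Type*} [MeasurableSpace X] [PseudoMetricSpace E]

/-- Almost uniform metastable pointwise convergence (AUM) of a sequence of maps into a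
pseudometric space. No limit is mentioned: on each window `[m, F m]` the sequence is compared with
itself. For maps that need not be measurable, `μ` is read as the outer measure it induces. -/
def ConvergesAUM (μ : Measure X) (f : ℕ → X → E) : Prop :=
  ∀ lam : ℝ, 0 < lam → ∀ ε : ℝ, 0 < ε → ∀ F : ℕ → ℕ, ∃ M : ℕ,
    μ {x | ∀ m ≤ M, ∃ n ∈ Set.Icc m (F m), ∃ n' ∈ Set.Icc m (F m),
      ε ≤ dist (f n x) (f n' x)} < ENNReal.ofReal lam

/-- Almost uniform metastable pointwise convergence to the limit `g`: the notion AUM' says that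
this holds for some measurable real-valued `g`. The conventions are those of `ConvergesAUM`. -/
def TendstoAUM (μ : Measure X) (f : ℕ → X → E) (g : X → E) : Prop :=
  ∀ lam : ℝ, 0 < lam → ∀ ε : ℝ, 0 < ε → ∀ F : ℕ → ℕ, ∃ M : ℕ,
    μ {x | ∀ m ≤ M, ∃ n ∈ Set.Icc m (F m), ε ≤ dist (f n x) (g x)} < ENNReal.ofReal lam

theorem exists_half_le_dist_of_exists_le_dist {ι : Type*} {s : Set ι} {u : ι → E} {ε : ℝ}
    (h : ∃ i ∈ s, ∃ j ∈ s, ε ≤ dist (u i) (u j)) (a : E) :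
    ∃ i ∈ s, ε / 2 ≤ dist (u i) a := by
  by_contra! hclose
  obtain ⟨i, hi, j, hj, hij⟩ := h
  have hlt : dist (u i) (u j) < ε := calc
    dist (u i) (u j) ≤ dist (u i) a + dist (u j) a := dist_triangle_right ..
    _ < ε / 2 + ε / 2 := add_lt_add (hclose i hi) (hclose j hj)
    _ = ε := add_halves ε
  exact hlt.not_ge hij

theorem stmt_16_general {μ : Measure X} {f : ℕ → X → E} {g : X → E} (h : TendstoAUM μ f g) :
    ConvergesAUM μ f := by
  intro lam hlam ε hε F
  obtain ⟨M, hM⟩ := h lam hlam (ε / 2) (half_pos hε) F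
  refine ⟨M, (measure_mono fun x hx m hm ↦ ?_).trans_lt hM⟩
  exact exists_half_le_dist_of_exists_le_dist (u := fun n ↦ f n x) (hx m hm) (g x)

end

theorem stmt_16 {X : Type*} [MeasurableSpace X] (μ : Measure X)
    (f : ℕ → X → ℝ) (hf : ∀ n, Measurable (f n))
    (hAUM' : ∃ g : X → ℝ, Measurable g ∧
      ∀ lam : ℝ, 0 < lam → ∀ ε : ℝ, 0 < ε → ∀ F : ℕ → ℕ, ∃ M : ℕ,
        μ {x | ∀ m ≤ M, ∃ n ∈ Set.Icc m (F m),
            ε ≤ |f n x - g x|} < ENNReal.ofReal lam) :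
    ∀ lam : ℝ, 0 < lam → ∀ ε : ℝ, 0 < ε → ∀ F : ℕ → ℕ, ∃ M : ℕ,
      μ {x | ∀ m ≤ M, ∃ n ∈ Set.Icc m (F m), ∃ n' ∈ Set.Icc m (F m),
          ε ≤ |f n x - f n' x|} < ENNReal.ofReal lam := by
  obtain ⟨g, -, hg⟩ := hAUM'
  exact stmt_16_general (g := g) hg
end
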